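/- arXiv:2605.08661 — 2 statements merged into one kernel-verified Lean document; each statement's English description precedes it below -/
import Mathlib

section
/- Let A, B, C, D be near Williamson matrices of order n. Then there exists a Hadamard matrix of order 4n; explicitly, with R the n×n back circulant (0,1)-matrix whose first row is (0, …, 0, 1), the 4n×4n block matrix W = [[AR, B, C, D], [-B, AR, D, -C], [-C, -D, AR, B], [-D, C, -B, AR]] is a Hadamard matrix of order 4n. -/
open Matrix

/-- `X` is circulant: `x_{ij} = x_{0, j-i}` with indices mod `n`. -/
def IsCirculant {n : ℕ} {α : Type*} (X : Matrix (ZMod n) (ZMod n) α) : Prop :=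
  ∀ i j, X i j = X 0 (j - i)

/-- `X` is a `(-1,1)`-matrix. -/
def IsPM1 {n : ℕ} (X : Matrix (ZMod n) (ZMod n) ℝ) : Prop :=
  ∀ i j, X i j = 1 ∨ X i j = -1

/-- `A, B, C, D` are near Williamson matrices of order `n`. -/
def IsNearWilliamson (n : ℕ) [NeZero n] (A B C D : Matrix (ZMod n) (ZMod n) ℝ) : Prop :=
  IsPM1 A ∧ IsPM1 B ∧ IsPM1 C ∧ IsPM1 D ∧
  IsCirculant A ∧ IsCirculant B ∧ IsCirculant C ∧ IsCirculant D ∧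
  B.IsSymm ∧ C.IsSymm ∧ D.IsSymm ∧
  A * Aᵀ + B * Bᵀ + C * Cᵀ + D * Dᵀ = (4 * n : ℝ) • 1

/-- The back circulant `(0,1)`-matrix `R` whose first row is `(0, …, 0, 1)`. -/
def Rmat (n : ℕ) : Matrix (ZMod n) (ZMod n) ℝ :=
  Matrix.of fun i j => if i + j = -1 then 1 else 0

theorem mul_Rmat_apply {n : ℕ} [NeZero n] (A : Matrix (ZMod n) (ZMod n) ℝ)
    (i j : ZMod n) : (A * Rmat n) i j = A i (-1 - j) := by
  rw [Matrix.mul_apply, Finset.sum_eq_single (-1 - j)]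
  · simp [Rmat]
  · intro k _ hk
    have : ¬ (k + j = -1) := fun h => hk (by rw [← h]; ring)
    simp [Rmat, this]
  · simp

theorem circ_comm {n : ℕ} [NeZero n] {X Y : Matrix (ZMod n) (ZMod n) ℝ}
    (hX : IsCirculant X) (hY : IsCirculant Y) : X * Y = Y * X := by
  ext i j
  rw [Matrix.mul_apply, Matrix.mul_apply]
  refine Fintype.sum_equiv (Equiv.subLeft (i + j)) _ _ fun k => ?_
  rw [hX i k, hY k j, hX _ j, hY i _, mul_comm]
  simp only [Equiv.subLeft_apply]
  congr 2 <;> ring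

theorem E_comm {n : ℕ} [NeZero n] {A X : Matrix (ZMod n) (ZMod n) ℝ}
    (hA : IsCirculant A) (hX : IsCirculant X) (hs : X.IsSymm) :
    (A * Rmat n) * X = X * (A * Rmat n) := by
  ext i j
  rw [Matrix.mul_apply, Matrix.mul_apply]
  refine Fintype.sum_equiv (Equiv.addLeft (i - j)) _ _ fun k => ?_
  rw [mul_Rmat_apply, mul_Rmat_apply, hA i, hA _ (-1 - j), ← hs.apply k j, hX j k, hX i _, mul_comm]
  simp only [Equiv.coe_addLeft]
  congr 2 <;> ring

theorem E_symm {n : ℕ} [NeZero n] {A : Matrix (ZMod n) (ZMod n) ℝ}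
    (hA : IsCirculant A) : (A * Rmat n)ᵀ = A * Rmat n := by
  ext i j
  rw [Matrix.transpose_apply, mul_Rmat_apply, mul_Rmat_apply, hA, hA i]
  congr 1; ring

theorem E_sq {n : ℕ} [NeZero n] (A : Matrix (ZMod n) (ZMod n) ℝ) :
    (A * Rmat n) * (A * Rmat n)ᵀ = A * Aᵀ := by
  ext i j
  rw [Matrix.mul_apply, Matrix.mul_apply]
  refine Fintype.sum_equiv (Equiv.subLeft (-1)) _ _ fun k => ?_
  simp only [Matrix.transpose_apply, mul_Rmat_apply, Equiv.subLeft_apply]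

/-- Near Williamson matrices of order `n` give a Hadamard matrix of
order `4n`: the Williamson array built from `AR, B, C, D` is a `(-1,1)`-matrix `W`
with `WWᵀ = 4n·I`. -/
theorem nearWilliamson_gives_hadamard (n : ℕ) [NeZero n]
    (A B C D : Matrix (ZMod n) (ZMod n) ℝ) (h : IsNearWilliamson n A B C D) :
    let E := A * Rmat n
    let W := Matrix.fromBlocks
      (Matrix.fromBlocks E B (-B) E) (Matrix.fromBlocks C D D (-C))
      (Matrix.fromBlocks (-C) (-D) (-D) C) (Matrix.fromBlocks E B (-B) E)
    (∀ i j, W i j = 1 ∨ W i j = -1) ∧ W * Wᵀ = (4 * n : ℝ) • 1 := by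
  obtain ⟨pA, pB, pC, pD, cA, cB, cC, cD, sB, sC, sD, hs⟩ := h
  intro E W
  have pE : IsPM1 E := fun i j => by
    simp only [E, mul_Rmat_apply]; exact pA _ _
  have neg : ∀ {X : Matrix (ZMod n) (ZMod n) ℝ}, IsPM1 X → IsPM1 (-X) := fun hX i j => by
    rcases hX i j with h | h <;> simp [h]
  refine ⟨?_, ?_⟩
  · rintro ((i | i) | (i | i)) ((j | j) | (j | j))
    all_goals
      simp only [W, Matrix.fromBlocks_apply₁₁, Matrix.fromBlocks_apply₁₂,
        Matrix.fromBlocks_apply₂₁, Matrix.fromBlocks_apply₂₂]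
      first
        | exact pE _ _ | exact pB _ _ | exact pC _ _ | exact pD _ _
        | exact neg pB _ _ | exact neg pC _ _ | exact neg pD _ _
  · have hE : Eᵀ = E := E_symm cA
    have eB : E * B = B * E := E_comm cA cB sB
    have eC : E * C = C * E := E_comm cA cC sC
    have eD : E * D = D * E := E_comm cA cD sD
    have bC : B * C = C * B := circ_comm cB cC
    have bD : B * D = D * B := circ_comm cB cD
    have cD' : C * D = D * C := circ_comm cC cD
    rw [← E_sq A] at hs
    change E * Eᵀ + _ + _ + _ = _ at hs
    rw [hE, sB.eq, sC.eq, sD.eq] at hs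
    have one : ((4 * n : ℝ) • 1 : Matrix ((ZMod n ⊕ ZMod n) ⊕ (ZMod n ⊕ ZMod n))
        ((ZMod n ⊕ ZMod n) ⊕ (ZMod n ⊕ ZMod n)) ℝ) =
        Matrix.fromBlocks (Matrix.fromBlocks ((4 * n : ℝ) • 1) 0 0 ((4 * n : ℝ) • 1)) 0 0
          (Matrix.fromBlocks ((4 * n : ℝ) • 1) 0 0 ((4 * n : ℝ) • 1)) := by
      rw [← Matrix.fromBlocks_one, ← Matrix.fromBlocks_one]
      simp only [Matrix.fromBlocks_smul, smul_zero]
    rw [one, ← hs, ← Matrix.fromBlocks_zero]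
    simp only [W, Matrix.fromBlocks_transpose, Matrix.transpose_neg, hE, sB.eq, sC.eq, sD.eq,
      Matrix.fromBlocks_multiply, Matrix.fromBlocks_add, Matrix.mul_neg, Matrix.neg_mul, neg_neg,
      eB, eC, eD, bC, bD, cD']
    congr 2 <;> abel
end

section
/- There exist near Williamson matrices of order 59; that is, there exist a 59×59 circulant (-1,1)-matrix A and three 59×59 symmetric circulant (-1,1)-matrices B, C, D such that AAᵀ + BBᵀ + CCᵀ + DDᵀ = 236·I. -/
open Matrix

/-- The `±1` sequence on `ZMod 59` encoded by the binary digits of `N`. -/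
def nwSeq (N : ℕ) (k : ZMod 59) : ℤ := if N.testBit k.val then 1 else -1

/-- The circulant matrix with first row `nwSeq N`. -/
def nwMat (N : ℕ) : Matrix (ZMod 59) (ZMod 59) ℝ := fun i j => (nwSeq N (j - i) : ℝ)

def nwA : ℕ := 337431207554121392
def nwB : ℕ := 124689725076534744
def nwC : ℕ := 317726423221875042
def nwD : ℕ := 152272033694479237

theorem nw_symm : (∀ k, nwSeq nwB (-k) = nwSeq nwB k) ∧ (∀ k, nwSeq nwC (-k) = nwSeq nwC k) ∧
    (∀ k, nwSeq nwD (-k) = nwSeq nwD k) := by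
  decide +kernel

theorem nw_paf : ∀ s : ZMod 59,
    (∑ k, nwSeq nwA k * nwSeq nwA (k + s)) + (∑ k, nwSeq nwB k * nwSeq nwB (k + s)) +
    (∑ k, nwSeq nwC k * nwSeq nwC (k + s)) + (∑ k, nwSeq nwD k * nwSeq nwD (k + s)) =
    if s = 0 then 236 else 0 := by
  decide +kernel

/-- There exist near Williamson matrices of order 59: a circulant
`(-1,1)`-matrix `A` and symmetric circulant `(-1,1)`-matrices `B, C, D` of order
59 with `AAᵀ + BBᵀ + CCᵀ + DDᵀ = 236·I`. -/
theorem exists_nearWilliamson_59 :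
    ∃ A B C D : Matrix (ZMod 59) (ZMod 59) ℝ,
      IsPM1 A ∧ IsPM1 B ∧ IsPM1 C ∧ IsPM1 D ∧
      IsCirculant A ∧ IsCirculant B ∧ IsCirculant C ∧ IsCirculant D ∧
      B.IsSymm ∧ C.IsSymm ∧ D.IsSymm ∧
      A * Aᵀ + B * Bᵀ + C * Cᵀ + D * Dᵀ = (236 : ℝ) • 1 := by
  have pm : ∀ (N : ℕ), IsPM1 (nwMat N) := by
    intro N i j
    unfold nwMat nwSeq
    split_ifs <;> simp
  have circ : ∀ (N : ℕ), IsCirculant (nwMat N) := by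
    intro N i j
    simp [nwMat]
  have symm : ∀ (N : ℕ), (∀ k, nwSeq N (-k) = nwSeq N k) → (nwMat N).IsSymm := by
    intro N h
    ext i j
    simp only [Matrix.transpose_apply, nwMat]
    rw [← h (j - i), neg_sub]
  have gram : ∀ (N : ℕ) (i j : ZMod 59), (nwMat N * (nwMat N)ᵀ) i j =
      ((∑ k, nwSeq N k * nwSeq N (k + (i - j)) : ℤ) : ℝ) := by
    intro N i j
    rw [Matrix.mul_apply]
    push_cast
    rw [← Equiv.sum_comp (Equiv.addRight i)]
    refine Finset.sum_congr rfl fun k _ => ?_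
    simp only [Matrix.transpose_apply, nwMat, Equiv.coe_addRight]
    rw [add_sub_cancel_right, add_sub_assoc]
  refine ⟨nwMat nwA, nwMat nwB, nwMat nwC, nwMat nwD, pm _, pm _, pm _, pm _,
    circ _, circ _, circ _, circ _, symm _ nw_symm.1, symm _ nw_symm.2.1, symm _ nw_symm.2.2, ?_⟩
  ext i j
  simp only [Matrix.add_apply, gram, Matrix.smul_apply, Matrix.one_apply]
  have h := nw_paf (i - j)
  rw [← Int.cast_add, ← Int.cast_add, ← Int.cast_add, h]
  by_cases hij : i = j
  · simp [hij]
  · simp [hij, sub_eq_zero]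
end
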